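/- arXiv:1410.5686 — 12 statements merged into one kernel-verified Lean document; each statement's English description precedes it below -/
import Mathlib

section
/- Let H be a separable real Hilbert space, 𝔘 ⊂ H a finite nonempty set, and x ∈ H. Let (P_n) be a sequence of Borel probability measures on H converging weakly to a Borel probability measure P such that for every u ∈ 𝔘 the pushforward measure P_u of P under y ↦ ⟨u,y⟩ has no atoms (its cumulative distribution function is continuous). Then D_RT(x,P_n) → D_RT(x,P) as n → ∞. -/
/-!
Weak convergence passes to the pushforwards under the continuous maps `y ↦ ⟪u, y⟫`. The frontier of
each of the half-lines `Iic t` and `Ici t` is `{t}`, a null set for an atomless limit, so the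
portmanteau theorem gives convergence of their masses, hence of `D1` (`tendsto_D1`). A minimum over
a finite set of directions preserves the limit.
-/

open MeasureTheory Filter Topology
open scoped RealInnerProductSpace

/-- The one-dimensional depth `D₁(t, Q) = min{Q((−∞,t]), Q([t,∞))}`. -/
noncomputable def D1 (Q : Measure ℝ) (t : ℝ) : ℝ :=
  min (Q (Set.Iic t)).toReal (Q (Set.Ici t)).toReal

/-- The random Tukey depth `D_RT(x, P) = min_{u ∈ U} D₁(⟨u,x⟩, P_u)`, where `P_u` is the
pushforward of `P` under `y ↦ ⟨u,y⟩`. -/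
noncomputable def DRT {H : Type*} [NormedAddCommGroup H] [InnerProductSpace ℝ H]
    [MeasurableSpace H] (U : Finset H) (hU : U.Nonempty) (x : H) (P : Measure H) : ℝ :=
  U.inf' hU fun u => D1 (P.map fun y => ⟪u, y⟫) ⟪u, x⟫

lemma tendsto_D1 {μ : ℕ → ProbabilityMeasure ℝ} {ν : ProbabilityMeasure ℝ}
    (h : Tendsto μ atTop (𝓝 ν)) {t : ℝ} (ht : (ν : Measure ℝ) {t} = 0) :
    Tendsto (fun n => D1 (μ n) t) atTop (𝓝 (D1 ν t)) := by
  have key : ∀ E : Set ℝ, frontier E = {t} →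
      Tendsto (fun n => ((μ n : Measure ℝ) E).toReal) atTop (𝓝 ((ν : Measure ℝ) E).toReal) := by
    intro E hE
    refine (ENNReal.tendsto_toReal (measure_ne_top _ _)).comp ?_
    exact ProbabilityMeasure.tendsto_measure_of_null_frontier_of_tendsto' h (by rw [hE, ht])
  exact (key _ frontier_Iic).min (key _ frontier_Ici)

/-- If `P n → Q` weakly and each one-dimensional marginal `Q_u`, `u ∈ U`, has
no atoms, then the random Tukey depth converges: `D_RT(x, P n) → D_RT(x, Q)`. -/
theorem stmt_5 {H : Type*} [NormedAddCommGroup H] [InnerProductSpace ℝ H]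
    [CompleteSpace H] [TopologicalSpace.SeparableSpace H]
    [MeasurableSpace H] [BorelSpace H]
    (U : Finset H) (hU : U.Nonempty) (x : H)
    (P : ℕ → Measure H) (Q : Measure H)
    [∀ n, IsProbabilityMeasure (P n)] [IsProbabilityMeasure Q]
    (hweak : ∀ f : BoundedContinuousFunction H ℝ,
      Tendsto (fun n => ∫ y, f y ∂(P n)) atTop (nhds (∫ y, f y ∂Q)))
    (hcont : ∀ u ∈ U, ∀ t : ℝ, (Q.map fun y => ⟪u, y⟫) {t} = 0) :
    Tendsto (fun n => DRT U hU x (P n)) atTop (nhds (DRT U hU x Q)) := by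
  let P' : ℕ → ProbabilityMeasure H := fun n => ⟨P n, inferInstance⟩
  let Q' : ProbabilityMeasure H := ⟨Q, inferInstance⟩
  have hPQ : Tendsto P' atTop (𝓝 Q') :=
    ProbabilityMeasure.tendsto_iff_forall_integral_tendsto.2 hweak
  refine Tendsto.finset_inf'_nhds_apply hU fun u hu => ?_
  have hc : Continuous fun y : H => ⟪u, y⟫ := by fun_prop
  exact tendsto_D1 (ProbabilityMeasure.tendsto_map_of_tendsto_of_continuous _ _ hPQ hc)
    (hcont u hu _)
end

section
/- Let H be a separable real Hilbert space, 𝔘 ⊂ H a finite nonempty set, and P a Borel probability measure on H. Then the map x ↦ D_RT(x,P) = min_{u∈𝔘} min{P({y : ⟨u,y⟩ ≤ ⟨u,x⟩}), P({y : ⟨u,y⟩ ≥ ⟨u,x⟩})} is upper semi-continuous on H. -/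
/-!
Upper semi-continuity is stable under finite minima and under composition with continuous maps,
so it suffices that `t ↦ Q((−∞,t])` and `t ↦ Q([t,∞))` are upper semi-continuous for a finite
measure `Q` on `ℝ`. The first holds because this function is nondecreasing and, by continuity
of `Q` from above, right-continuous (`upperSemicontinuous_Iic`); the second follows by reflecting
`Q` about the origin (`upperSemicontinuous_Ici`).
-/

open MeasureTheory Filter Topology
open scoped RealInnerProductSpace

lemma upperSemicontinuous_Iic (Q : Measure ℝ) [IsFiniteMeasure Q] :
    UpperSemicontinuous fun t : ℝ => (Q (Set.Iic t)).toReal := by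
  intro t c hc
  have h := tendsto_measure_biInter_gt (μ := Q) (s := fun r : ℝ => Set.Iic r) (a := t)
    (fun r _ => measurableSet_Iic.nullMeasurableSet)
    (fun i j _ hij => Set.Iic_subset_Iic.2 hij) ⟨t + 1, by simp, measure_ne_top _ _⟩
  have hI : (⋂ r > t, Set.Iic r) = Set.Iic t := by
    ext z
    simp only [Set.mem_iInter, Set.mem_Iic]
    exact ⟨fun hz => le_of_forall_gt_imp_ge_of_dense hz, fun hz r hr => hz.trans hr.le⟩
  rw [hI] at h
  have h' := (ENNReal.tendsto_toReal (measure_ne_top Q (Set.Iic t))).comp h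
  -- Right-continuity gives some `r > t` with `Q((−∞,r]) < c`; monotonicity covers all `s < r`.
  obtain ⟨r, hr, htr⟩ := ((h'.eventually_lt_const hc).and self_mem_nhdsWithin).exists
  filter_upwards [Iio_mem_nhds htr] with s hs
  exact (ENNReal.toReal_mono (measure_ne_top _ _)
    (measure_mono (Set.Iic_subset_Iic.2 (le_of_lt hs)))).trans_lt hr

lemma upperSemicontinuous_Ici (Q : Measure ℝ) [IsFiniteMeasure Q] :
    UpperSemicontinuous fun t : ℝ => (Q (Set.Ici t)).toReal := by
  have h := (upperSemicontinuous_Iic (Q.map fun y => -y)).comp (continuous_neg (G := ℝ))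
  convert h using 2 with t
  rw [Function.comp_apply, Measure.map_apply measurable_neg measurableSet_Iic]
  congr 2
  ext z
  simp

lemma upperSemicontinuous_D1 (Q : Measure ℝ) [IsFiniteMeasure Q] :
    UpperSemicontinuous (D1 Q) :=
  (upperSemicontinuous_Iic Q).inf (upperSemicontinuous_Ici Q)

/-- The random Tukey depth `x ↦ D_RT(x, P)` is upper semi-continuous:
for every `x` and `ε > 0` there is `δ > 0` with `D_RT(y,P) ≤ D_RT(x,P) + ε` whenever
`‖y − x‖ < δ`. -/
theorem stmt_6 {H : Type*} [NormedAddCommGroup H] [InnerProductSpace ℝ H]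
    [CompleteSpace H] [TopologicalSpace.SeparableSpace H]
    [MeasurableSpace H] [BorelSpace H]
    (U : Finset H) (hU : U.Nonempty)
    (P : Measure H) [IsProbabilityMeasure P] :
    ∀ x : H, ∀ ε > (0 : ℝ), ∃ δ > (0 : ℝ), ∀ y : H,
      ‖y - x‖ < δ → DRT U hU y P ≤ DRT U hU x P + ε := by
  intro x ε hε
  -- Near `x`, the direction attaining the minimum at `x` already controls the depth.
  obtain ⟨u, hu, hux⟩ := U.exists_mem_eq_inf' hU fun u => D1 (P.map fun y => ⟪u, y⟫) ⟪u, x⟫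
  have hcont : Continuous fun y : H => ⟪u, y⟫ := by fun_prop
  have h := ((upperSemicontinuous_D1 (P.map fun y => ⟪u, y⟫)).comp hcont) x
    (DRT U hU x P + ε) (by
      have hx : DRT U hU x P = D1 (P.map fun y => ⟪u, y⟫) ⟪u, x⟫ := hux
      rw [hx]
      exact lt_add_of_pos_right _ hε)
  obtain ⟨δ, hδ, hball⟩ := Metric.eventually_nhds_iff.1 h
  refine ⟨δ, hδ, fun y hy => ?_⟩
  exact (Finset.inf'_le _ hu).trans (hball (by rwa [dist_eq_norm])).le
end

section
/- Let V be a nonempty compact subset of ℝ and P a Borel probability measure on C(V). Then the map x ↦ D_HR(x,P) is upper semi-continuous on C(V) with respect to the supremum norm. -/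
/-! The hypographs `{z | z ≤ y}` and `{z | z ≤ x}` are translates of each other by `y - x`, and
likewise the epigraphs. Hence when `‖y - x‖ < δ` the half region of `y` lies in the closed
`δ`-thickening of the half region of `x`. The latter is a closed set, so the probabilities of its
thickenings decrease to its own probability as `δ → 0`. Each of the two probabilities is therefore
upper semi-continuous, and so is their minimum. -/

open MeasureTheory Filter Topology

/-- The half region depth: the minimum of the probability that `X` lies in the hypograph
of `x` and the probability that `X` lies in the epigraph of `x`. -/
noncomputable def DHR {V : Set ℝ} [CompactSpace V] [MeasurableSpace C(V, ℝ)]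
    (x : C(V, ℝ)) (P : Measure C(V, ℝ)) : ℝ :=
  min (P {y | ∀ v, y v ≤ x v}).toReal (P {y | ∀ v, x v ≤ y v}).toReal

/-- Translating a closed set by a short vector (or passing to a subset of the translate) cannot
increase its measure by much. -/
lemma exists_measure_translate_le {E : Type*} [SeminormedAddCommGroup E] [MeasurableSpace E]
    [OpensMeasurableSpace E] (μ : Measure E) [IsFiniteMeasure μ] {S : Set E} (hS : IsClosed S)
    {ε : ℝ} (hε : 0 < ε) :
    ∃ δ > (0 : ℝ), ∀ (h : E) (T : Set E), ‖h‖ < δ → (∀ z ∈ T, z - h ∈ S) →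
      (μ T).toReal ≤ (μ S).toReal + ε := by
  have lim : Tendsto (fun r => (μ (Metric.cthickening r S)).toReal) (𝓝 0) (𝓝 (μ S).toReal) :=
    (ENNReal.tendsto_toReal (measure_ne_top μ S)).comp
      (tendsto_measure_cthickening_of_isClosed ⟨1, one_pos, measure_ne_top _ _⟩ hS)
  obtain ⟨r, hr, hr0⟩ := (((lim.eventually_lt_const (lt_add_of_pos_right _ hε)).filter_mono
    nhdsWithin_le_nhds).and (self_mem_nhdsWithin (s := Set.Ioi (0 : ℝ)))).exists
  refine ⟨r, hr0, fun h T hh hT => le_trans ?_ hr.le⟩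
  refine ENNReal.toReal_mono (measure_ne_top _ _) (measure_mono fun z hz => ?_)
  refine Metric.mem_cthickening_of_dist_le z (z - h) r S (hT z hz) ?_
  simpa [dist_eq_norm] using hh.le

/-- For `V` a nonempty compact subset of `ℝ` and `P` a Borel probability
measure on `C(V)`, the half region depth `x ↦ D_HR(x, P)` is upper semi-continuous w.r.t.
the supremum norm. -/
theorem stmt_7 (V : Set ℝ) [CompactSpace V] (hV : IsCompact V) (hne : V.Nonempty)
    [MeasurableSpace C(V, ℝ)] [BorelSpace C(V, ℝ)]
    (P : Measure C(V, ℝ)) [IsProbabilityMeasure P] :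
    ∀ x : C(V, ℝ), ∀ ε > (0 : ℝ), ∃ δ > (0 : ℝ), ∀ y : C(V, ℝ),
      ‖y - x‖ < δ → DHR y P ≤ DHR x P + ε := by
  intro x ε hε
  have cev : ∀ v : V, Continuous fun z : C(V, ℝ) => z v := fun v => by fun_prop
  have hlow : IsClosed {z : C(V, ℝ) | ∀ v, z v ≤ x v} := by
    simp only [Set.setOf_forall]
    exact isClosed_iInter fun v => isClosed_le (cev v) continuous_const
  have hup : IsClosed {z : C(V, ℝ) | ∀ v, x v ≤ z v} := by
    simp only [Set.setOf_forall]
    exact isClosed_iInter fun v => isClosed_le continuous_const (cev v)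
  obtain ⟨δ₁, h₁, H₁⟩ := exists_measure_translate_le P hlow hε
  obtain ⟨δ₂, h₂, H₂⟩ := exists_measure_translate_le P hup hε
  refine ⟨min δ₁ δ₂, lt_min h₁ h₂, fun y hy => ?_⟩
  rw [DHR, DHR, ← min_add_add_right]
  refine min_le_min (H₁ (y - x) _ (hy.trans_le (min_le_left _ _)) fun z hz v => ?_)
    (H₂ (y - x) _ (hy.trans_le (min_le_right _ _)) fun z hz v => ?_)
  · have := hz v
    simp only [ContinuousMap.sub_apply]
    linarith
  · have := hz v
    simp only [ContinuousMap.sub_apply]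
    linarith
end

section
/- Let V be a compact subset of ℝ with Lebesgue measure λ(V) > 0 and P a Borel probability measure on C(V). Then the map x ↦ D_MHR(x,P) is upper semi-continuous on C(V) with respect to the supremum norm. -/
/-!
If `‖y - x‖ < δ`, then `{v | z v ≤ y v} ⊆ {v | z v ≤ x v + δ}` for every `z`. As `δ ↓ 0` the larger
sets decrease to `{v | z v ≤ x v}`, so continuity from above of Lebesgue measure on `V`, followed by
dominated convergence in `z`, shows that the first integral in `D_MHR` is upper semi-continuous.
The second one is treated the same way, and a minimum of two upper semi-continuous functions is
upper semi-continuous. `exists_integral_sublevel_le` carries the argument for both integrals; joint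
measurability in `(z, v)` comes from continuity of evaluation `C(V, ℝ) × V → ℝ`.
-/

open MeasureTheory Filter Topology

/-- Lebesgue measure on the subtype `V ⊆ ℝ`. -/
noncomputable def lamV (V : Set ℝ) : Measure V :=
  Measure.comap Subtype.val volume

/-- The modified half region depth
`D_MHR(x,P) = min{∫ λ{v : y v ≤ x v} dP(y), ∫ λ{v : x v ≤ y v} dP(y)} / λ(V)`. -/
noncomputable def DMHR {V : Set ℝ} [CompactSpace V] [MeasurableSpace C(V, ℝ)]
    (x : C(V, ℝ)) (P : Measure C(V, ℝ)) : ℝ :=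
  min (∫ y, (lamV V {v | y v ≤ x v}).toReal ∂P)
      (∫ y, (lamV V {v | x v ≤ y v}).toReal ∂P) / (lamV V Set.univ).toReal

theorem integrable_measure_sublevel {α β : Type*} [MeasurableSpace α] [MeasurableSpace β]
    (P : Measure α) [IsFiniteMeasure P] (μ : Measure β) [IsFiniteMeasure μ]
    {h : α × β → ℝ} (hh : Measurable h) (c : ℝ) :
    Integrable (fun z => (μ {v | h (z, v) ≤ c}).toReal) P := by
  have hm : Measurable fun z => (μ {v | h (z, v) ≤ c}).toReal :=
    (measurable_measure_prodMk_left (hh measurableSet_Iic)).ennreal_toReal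
  refine Integrable.of_bound hm.aestronglyMeasurable (μ Set.univ).toReal (ae_of_all _ fun z => ?_)
  rw [Real.norm_of_nonneg ENNReal.toReal_nonneg]
  exact ENNReal.toReal_mono (measure_ne_top _ _) (measure_mono (Set.subset_univ _))

/-- Upper semi-continuity, under uniform perturbations of `h`, of the integrated measure of the
sublevel sets `{v | h (z, v) ≤ 0}`. -/
theorem exists_integral_sublevel_le {α β : Type*} [MeasurableSpace α] [MeasurableSpace β]
    (P : Measure α) [IsFiniteMeasure P] (μ : Measure β) [IsFiniteMeasure μ]
    {h : α × β → ℝ} (hh : Measurable h) {ε : ℝ} (hε : 0 < ε) :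
    ∃ δ > (0 : ℝ), ∀ k : α × β → ℝ, Measurable k → (∀ p, h p ≤ k p + δ) →
      ∫ z, (μ {v | k (z, v) ≤ 0}).toReal ∂P ≤ ∫ z, (μ {v | h (z, v) ≤ 0}).toReal ∂P + ε := by
  have hanti : Antitone fun n : ℕ => 1 / ((n : ℝ) + 1) := fun m n hmn =>
    Nat.one_div_le_one_div hmn
  have hlim : Tendsto (fun n : ℕ => ∫ z, (μ {v | h (z, v) ≤ 1 / ((n : ℝ) + 1)}).toReal ∂P) atTop
      (𝓝 (∫ z, (μ {v | h (z, v) ≤ 0}).toReal ∂P)) := by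
    refine tendsto_integral_of_dominated_convergence (fun _ => (μ Set.univ).toReal)
      (fun n => (integrable_measure_sublevel P μ hh _).aestronglyMeasurable)
      (integrable_const _) (fun n => ae_of_all _ fun z => ?_) (ae_of_all _ fun z => ?_)
    · rw [Real.norm_of_nonneg ENNReal.toReal_nonneg]
      exact ENNReal.toReal_mono (measure_ne_top _ _) (measure_mono (Set.subset_univ _))
    · refine (ENNReal.tendsto_toReal (measure_ne_top _ _)).comp ?_
      have hI : {v | h (z, v) ≤ 0} = ⋂ n : ℕ, {v | h (z, v) ≤ 1 / ((n : ℝ) + 1)} := by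
        ext v
        simp only [Set.mem_setOf_eq, Set.mem_iInter]
        exact ⟨fun hv n => hv.trans Nat.one_div_pos_of_nat.le,
          fun hv => ge_of_tendsto' tendsto_one_div_add_atTop_nhds_zero_nat hv⟩
      rw [hI]
      refine tendsto_measure_iInter_atTop (fun n => ?_) (fun m n hmn v hv => ?_)
        ⟨0, measure_ne_top _ _⟩
      · exact ((hh.comp measurable_prodMk_left) measurableSet_Iic).nullMeasurableSet
      · exact le_trans hv (hanti hmn)
  obtain ⟨n, hn⟩ := (hlim.eventually (gt_mem_nhds (lt_add_of_pos_right _ hε))).exists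
  refine ⟨1 / ((n : ℝ) + 1), Nat.one_div_pos_of_nat, fun k hk hkh => ?_⟩
  refine le_trans (integral_mono (integrable_measure_sublevel P μ hk 0)
    (integrable_measure_sublevel P μ hh _) fun z => ?_) hn.le
  refine ENNReal.toReal_mono (measure_ne_top _ _) (measure_mono fun v hv => ?_)
  have := hkh (z, v)
  simp only [Set.mem_setOf_eq] at hv ⊢
  linarith

theorem lamV_univ {V : Set ℝ} (hV : IsCompact V) : lamV V Set.univ = volume V := by
  rw [lamV, comap_subtype_coe_apply hV.measurableSet]
  simp

/-- For `V` a compact subset of `ℝ` with `λ(V) > 0` and `P` a Borel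
probability measure on `C(V)`, the modified half region depth `x ↦ D_MHR(x, P)` is upper
semi-continuous w.r.t. the supremum norm. -/
theorem stmt_8 (V : Set ℝ) [CompactSpace V] (hV : IsCompact V)
    (hVpos : 0 < volume V)
    [MeasurableSpace C(V, ℝ)] [BorelSpace C(V, ℝ)]
    (P : Measure C(V, ℝ)) [IsProbabilityMeasure P] :
    ∀ x : C(V, ℝ), ∀ ε > (0 : ℝ), ∃ δ > (0 : ℝ), ∀ y : C(V, ℝ),
      ‖y - x‖ < δ → DMHR y P ≤ DMHR x P + ε := by
  intro x ε hε
  have : IsFiniteMeasure (lamV V) := ⟨by rw [lamV_univ hV]; exact hV.measure_lt_top⟩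
  have hL : 0 < (lamV V Set.univ).toReal := by
    rw [lamV_univ hV]
    exact ENNReal.toReal_pos hVpos.ne' hV.measure_lt_top.ne
  have hm1 : ∀ y : C(V, ℝ), Measurable fun p : C(V, ℝ) × V => p.1 p.2 - y p.2 := fun y =>
    Continuous.measurable (by fun_prop)
  have hm2 : ∀ y : C(V, ℝ), Measurable fun p : C(V, ℝ) × V => y p.2 - p.1 p.2 := fun y =>
    Continuous.measurable (by fun_prop)
  obtain ⟨δ₁, hδ₁, h₁⟩ := exists_integral_sublevel_le P (lamV V) (hm1 x) (mul_pos hε hL)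
  obtain ⟨δ₂, hδ₂, h₂⟩ := exists_integral_sublevel_le P (lamV V) (hm2 x) (mul_pos hε hL)
  refine ⟨min δ₁ δ₂, lt_min hδ₁ hδ₂, fun y hy => ?_⟩
  have hb : ∀ v, |y v - x v| < min δ₁ δ₂ := fun v =>
    lt_of_le_of_lt ((y - x).norm_coe_le_norm v) hy
  have k₁ := h₁ _ (hm1 y) fun p => by
    have := (abs_lt.1 ((hb p.2).trans_le (min_le_left _ _))).2
    linarith
  have k₂ := h₂ _ (hm2 y) fun p => by
    have := (abs_lt.1 ((hb p.2).trans_le (min_le_right _ _))).1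
    linarith
  simp only [sub_nonpos] at k₁ k₂
  rw [DMHR, DMHR, div_add' _ _ _ hL.ne', div_le_div_iff_of_pos_right hL, ← min_add_add_right]
  exact min_le_min k₁ k₂
end

section
/- Let V be a compact subset of ℝ with Lebesgue measure λ(V) > 0, let J ≥ 2, and let P be a Borel probability measure on C(V). Then the map x ↦ D_MJ(x,P) is upper semi-continuous on C(V) with respect to the supremum norm. -/
/-!
Fix `x` and thicken the band by `t ≥ 0`: let `thickBand x y t` be the set of `v` with
`min_k y_k(v) - t ≤ x(v) ≤ max_k y_k(v) + t`. If `‖z - x‖ ≤ t`, the (unthickened) band set of `z`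
lies in `thickBand x y t`, so `D_MJ(z, P)` is bounded by the depth of `x` computed with thickened
bands. As `t = 1/(n+1)` decreases to `0`, the thickened sets decrease to the band set of `x`, so
continuity from above of `λ` followed by dominated convergence shows that the thickened depth
converges to `D_MJ(x, P)`. Once it is below `D_MJ(x, P) + ε`, the corresponding `1/(n+1)` is the
required `δ`.

Integrability in `y` comes from joint measurability in `(y, v)`, which uses that `C(V, ℝ)` is second
countable.
-/

open MeasureTheory Filter Topology

/-- The modified band depth
`D_MJ(x,P) = Σ_{j=2}^{J} ∫ λ{v ∈ V : min_k y_k(v) ≤ x(v) ≤ max_k y_k(v)} dP^{⊗j}(y) / λ(V)`. -/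
noncomputable def DMJ {V : Set ℝ} [CompactSpace V] [MeasurableSpace C(V, ℝ)]
    (J : ℕ) (x : C(V, ℝ)) (P : Measure C(V, ℝ)) : ℝ :=
  ∑ j ∈ Finset.Icc 2 J,
    (∫ y : Fin j → C(V, ℝ),
      (lamV V {v | (⨅ k, y k v) ≤ x v ∧ x v ≤ ⨆ k, y k v}).toReal
      ∂(Measure.pi fun _ : Fin j => P)) / (lamV V Set.univ).toReal

/-- The set of points where `x` lies in the band spanned by `y`, enlarged by `t` on both sides. -/
def thickBand {V : Set ℝ} {j : ℕ} (x : C(V, ℝ)) (y : Fin j → C(V, ℝ)) (t : ℝ) : Set V :=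
  {v | (⨅ k, y k v) - t ≤ x v ∧ x v ≤ (⨆ k, y k v) + t}

theorem isFiniteMeasure_lamV {V : Set ℝ} (hV : IsCompact V) : IsFiniteMeasure (lamV V) := by
  refine ⟨?_⟩
  rw [lamV, (MeasurableEmbedding.subtype_coe hV.measurableSet).comap_apply]
  simpa using hV.measure_lt_top

theorem measurableSet_thickBand_prod {V : Set ℝ} [CompactSpace V]
    [MeasurableSpace C(V, ℝ)] [BorelSpace C(V, ℝ)] {j : ℕ} (x : C(V, ℝ)) (t : ℝ) :
    MeasurableSet {p : (Fin j → C(V, ℝ)) × V | p.2 ∈ thickBand x p.1 t} := by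
  have heval : ∀ k : Fin j, Measurable fun p : (Fin j → C(V, ℝ)) × V => p.1 k p.2 := fun k =>
    Continuous.measurable (by fun_prop)
  have hx : Measurable fun p : (Fin j → C(V, ℝ)) × V => x p.2 :=
    x.continuous.measurable.comp measurable_snd
  exact (measurableSet_le ((Measurable.iInf heval).sub_const t) hx).inter
    (measurableSet_le hx ((Measurable.iSup heval).add_const t))

theorem measurableSet_thickBand {V : Set ℝ} [CompactSpace V] {j : ℕ}
    (x : C(V, ℝ)) (y : Fin j → C(V, ℝ)) (t : ℝ) : MeasurableSet (thickBand x y t) := by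
  borelize C(V, ℝ)
  exact (measurableSet_thickBand_prod (j := j) x t).preimage measurable_prodMk_left

theorem measurable_lamV_thickBand {V : Set ℝ} [CompactSpace V] (hV : IsCompact V)
    [MeasurableSpace C(V, ℝ)] [BorelSpace C(V, ℝ)] {j : ℕ} (x : C(V, ℝ)) (t : ℝ) :
    Measurable fun y : Fin j → C(V, ℝ) => (lamV V (thickBand x y t)).toReal := by
  have := isFiniteMeasure_lamV hV
  exact (measurable_measure_prodMk_left (ν := lamV V)
    (measurableSet_thickBand_prod (j := j) x t)).ennreal_toReal

theorem norm_lamV_thickBand_le {V : Set ℝ} (hV : IsCompact V) {j : ℕ} (x : C(V, ℝ))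
    (y : Fin j → C(V, ℝ)) (t : ℝ) :
    ‖(lamV V (thickBand x y t)).toReal‖ ≤ (lamV V Set.univ).toReal := by
  have := isFiniteMeasure_lamV hV
  rw [Real.norm_of_nonneg ENNReal.toReal_nonneg]
  exact ENNReal.toReal_mono (measure_ne_top _ _) (measure_mono (Set.subset_univ _))

theorem integrable_lamV_thickBand {V : Set ℝ} [CompactSpace V] (hV : IsCompact V)
    [MeasurableSpace C(V, ℝ)] [BorelSpace C(V, ℝ)] (P : Measure C(V, ℝ)) [IsProbabilityMeasure P]
    {j : ℕ} (x : C(V, ℝ)) (t : ℝ) :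
    Integrable (fun y : Fin j → C(V, ℝ) => (lamV V (thickBand x y t)).toReal)
      (Measure.pi fun _ : Fin j => P) :=
  (integrable_const (lamV V Set.univ).toReal).mono'
    (measurable_lamV_thickBand hV x t).aestronglyMeasurable
    (Eventually.of_forall fun y => norm_lamV_thickBand_le hV x y t)

/-- Continuity from above along `t = 1/(n+1) ↓ 0`, for a fixed tuple `y`. -/
theorem tendsto_lamV_thickBand {V : Set ℝ} [CompactSpace V] (hV : IsCompact V) {j : ℕ}
    (x : C(V, ℝ)) (y : Fin j → C(V, ℝ)) :
    Tendsto (fun n : ℕ => (lamV V (thickBand x y (1 / ((n : ℝ) + 1)))).toReal) atTop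
      (𝓝 (lamV V (thickBand x y 0)).toReal) := by
  have := isFiniteMeasure_lamV hV
  have hinter : thickBand x y 0 = ⋂ n : ℕ, thickBand x y (1 / ((n : ℝ) + 1)) := by
    ext v
    simp only [thickBand, Set.mem_iInter, Set.mem_ofPred_eq, sub_zero, add_zero]
    constructor
    · rintro ⟨h1, h2⟩ n
      have : (0 : ℝ) < 1 / ((n : ℝ) + 1) := Nat.one_div_pos_of_nat
      constructor <;> linarith
    · intro h
      have h0 := tendsto_one_div_add_atTop_nhds_zero_nat (𝕜 := ℝ)
      constructor
      · refine le_of_tendsto' (x := atTop) (f := fun n : ℕ => (⨅ k, y k v) - 1 / ((n : ℝ) + 1)) ?_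
          fun n => (h n).1
        simpa using h0.const_sub (⨅ k, y k v)
      · refine ge_of_tendsto' (x := atTop) (f := fun n : ℕ => (⨆ k, y k v) + 1 / ((n : ℝ) + 1)) ?_
          fun n => (h n).2
        simpa using h0.const_add (⨆ k, y k v)
  have hanti : Antitone fun n : ℕ => thickBand x y (1 / ((n : ℝ) + 1)) := by
    intro m n hmn v hv
    have : 1 / ((n : ℝ) + 1) ≤ 1 / ((m : ℝ) + 1) := Nat.one_div_le_one_div hmn
    exact ⟨by linarith [hv.1], by linarith [hv.2]⟩
  rw [hinter]
  exact (ENNReal.tendsto_toReal (measure_ne_top _ _)).comp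
    (tendsto_measure_iInter_atTop
      (fun n => (measurableSet_thickBand x y _).nullMeasurableSet) hanti
      ⟨0, measure_ne_top _ _⟩)

theorem thickBand_zero_subset {V : Set ℝ} [CompactSpace V] {j : ℕ} {x z : C(V, ℝ)} {t : ℝ}
    (h : ‖z - x‖ ≤ t) (y : Fin j → C(V, ℝ)) : thickBand z y 0 ⊆ thickBand x y t := by
  rintro v ⟨h1, h2⟩
  have hv : |z v - x v| ≤ t := ((z - x).norm_coe_le_norm v).trans h
  have := abs_le.mp hv
  exact ⟨by linarith, by linarith⟩

theorem DMJ_eq_thickBand {V : Set ℝ} [CompactSpace V] [MeasurableSpace C(V, ℝ)]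
    (J : ℕ) (x : C(V, ℝ)) (P : Measure C(V, ℝ)) :
    DMJ J x P = ∑ j ∈ Finset.Icc 2 J,
      (∫ y : Fin j → C(V, ℝ), (lamV V (thickBand x y 0)).toReal
        ∂(Measure.pi fun _ : Fin j => P)) / (lamV V Set.univ).toReal := by
  simp only [DMJ, thickBand, sub_zero, add_zero]

/-- For `V` a compact subset of `ℝ` with `λ(V) > 0`, `J ≥ 2`, and `P` a Borel
probability measure on `C(V)`, the modified band depth `x ↦ D_MJ(x, P)` is upper
semi-continuous w.r.t. the supremum norm. -/
theorem stmt_9 (V : Set ℝ) [CompactSpace V] (hV : IsCompact V)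
    (hVpos : 0 < volume V)
    (J : ℕ) (hJ : 2 ≤ J)
    [MeasurableSpace C(V, ℝ)] [BorelSpace C(V, ℝ)]
    (P : Measure C(V, ℝ)) [IsProbabilityMeasure P] :
    ∀ x : C(V, ℝ), ∀ ε > (0 : ℝ), ∃ δ > (0 : ℝ), ∀ y : C(V, ℝ),
      ‖y - x‖ < δ → DMJ J y P ≤ DMJ J x P + ε := by
  intro x ε hε
  have hfin := isFiniteMeasure_lamV hV
  have hlim : Tendsto (fun n : ℕ => ∑ j ∈ Finset.Icc 2 J,
      (∫ y : Fin j → C(V, ℝ), (lamV V (thickBand x y (1 / ((n : ℝ) + 1)))).toReal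
        ∂(Measure.pi fun _ : Fin j => P)) / (lamV V Set.univ).toReal) atTop
      (𝓝 (DMJ J x P)) := by
    rw [DMJ_eq_thickBand]
    refine tendsto_finsetSum _ fun j _ => Tendsto.div_const ?_ _
    exact tendsto_integral_of_dominated_convergence (fun _ => (lamV V Set.univ).toReal)
      (fun n => (measurable_lamV_thickBand hV x _).aestronglyMeasurable)
      (integrable_const _)
      (fun n => Eventually.of_forall fun y => norm_lamV_thickBand_le hV x y _)
      (Eventually.of_forall fun y => tendsto_lamV_thickBand hV x y)
  obtain ⟨n, hn⟩ := (hlim.eventually_le_const (lt_add_of_pos_right _ hε)).exists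
  refine ⟨1 / ((n : ℝ) + 1), Nat.one_div_pos_of_nat, fun z hz => le_trans ?_ hn⟩
  rw [DMJ_eq_thickBand]
  refine Finset.sum_le_sum fun j _ => div_le_div_of_nonneg_right ?_ ENNReal.toReal_nonneg
  exact integral_mono (integrable_lamV_thickBand hV P z 0) (integrable_lamV_thickBand hV P x _)
    fun y => ENNReal.toReal_mono (measure_ne_top _ _)
      (measure_mono (thickBand_zero_subset hz.le y))
end

section
/- Let V be a nonempty compact subset of ℝ, let α, b ∈ C(V) with α(v) > 0 for all v ∈ V, and let T : C(V) → C(V) be the map T(y)(v) = α(v)y(v) + b(v). Then for every Borel probability measure P on C(V) and every x ∈ C(V), D_HR(T(x), T_*P) = D_HR(x, P), where T_*P is the pushforward of P under T. -/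
/-!
For each `v` the map `t ↦ α v * t + b v` is strictly increasing, so the preimages under `T` of the
hypograph and epigraph regions of `T x` are exactly the corresponding regions of `x`. Both regions
are closed in `C(V, ℝ)` and `T` is continuous, so the pushforward measure is evaluated on them by
taking preimages.
-/

open MeasureTheory Filter Topology

/-- The half region depth is invariant under the transformation
`T(y) = α·y + b` with `α(v) > 0` for all `v`: `D_HR(T x, T_*P) = D_HR(x, P)`. -/
theorem stmt_10 (V : Set ℝ) [CompactSpace V] (hV : IsCompact V) (hne : V.Nonempty)
    [MeasurableSpace C(V, ℝ)] [BorelSpace C(V, ℝ)]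
    (α b : C(V, ℝ)) (hα : ∀ v, 0 < α v)
    (P : Measure C(V, ℝ)) [IsProbabilityMeasure P] (x : C(V, ℝ)) :
    DHR (α * x + b) (P.map fun y => α * y + b) = DHR x P := by
  have hT : Measurable fun y : C(V, ℝ) => α * y + b :=
    (by fun_prop : Continuous fun y : C(V, ℝ) => α * y + b).measurable
  have hlow : MeasurableSet {y : C(V, ℝ) | ∀ v, y v ≤ (α * x + b) v} := by
    refine IsClosed.measurableSet ?_
    simp only [Set.ofPred_forall]
    exact isClosed_iInter fun v =>
      isClosed_le (continuous_eval_const v) continuous_const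
  have hup : MeasurableSet {y : C(V, ℝ) | ∀ v, (α * x + b) v ≤ y v} := by
    refine IsClosed.measurableSet ?_
    simp only [Set.ofPred_forall]
    exact isClosed_iInter fun v =>
      isClosed_le continuous_const (continuous_eval_const v)
  unfold DHR
  rw [Measure.map_apply hT hlow, Measure.map_apply hT hup]
  -- `t ↦ α v * t + b v` is an order embedding of `ℝ`, so both preimages are the original regions.
  simp [Set.preimage, hα]
end

section
/- Let V be a compact subset of ℝ with Lebesgue measure λ(V) > 0, let α, b ∈ C(V) with α(v) > 0 for all v ∈ V, and let T : C(V) → C(V) be the map T(y)(v) = α(v)y(v) + b(v). Then for every Borel probability measure P on C(V) and every x ∈ C(V), D_MHR(T(x), T_*P) = D_MHR(x, P), where T_*P is the pushforward of P under T. -/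
/-!
For `α v > 0` the inequality `α v * s + b v ≤ α v * t + b v` is equivalent to `s ≤ t`, so `T` leaves the
level sets in the depth unchanged. The change of variables under the integral costs no measurability
of the integrand, because `T` is a homeomorphism of `C(V, ℝ)` (with inverse `y ↦ α⁻¹ * (y - b)`),
hence a measurable embedding.
-/

open MeasureTheory Filter Topology

/-- The modified half region depth is invariant under the transformation
`T(y) = α·y + b` with `α(v) > 0` for all `v`: `D_MHR(T x, T_*P) = D_MHR(x, P)`. -/
theorem stmt_11 (V : Set ℝ) [CompactSpace V] (hV : IsCompact V)
    (hVpos : 0 < volume V)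
    [MeasurableSpace C(V, ℝ)] [BorelSpace C(V, ℝ)]
    (α b : C(V, ℝ)) (hα : ∀ v, 0 < α v)
    (P : Measure C(V, ℝ)) [IsProbabilityMeasure P] (x : C(V, ℝ)) :
    DMHR (α * x + b) (P.map fun y => α * y + b) = DMHR x P := by
  -- The inverse of `T` is `y ↦ β * (y - b)` with `β = 1 / α`, continuous since `α` has no zeros.
  let β : C(V, ℝ) := ⟨fun v => (α v)⁻¹, α.continuous.inv₀ fun v => (hα v).ne'⟩
  have hβα (v : V) : (α v)⁻¹ * α v = 1 := inv_mul_cancel₀ (hα v).ne'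
  let T : C(V, ℝ) ≃ₜ C(V, ℝ) :=
    { toFun := fun y => α * y + b
      invFun := fun y => β * (y - b)
      left_inv := fun y => by
        ext v
        change (α v)⁻¹ * (α v * y v + b v - b v) = y v
        rw [add_sub_cancel_right, ← mul_assoc, hβα, one_mul]
      right_inv := fun y => by
        ext v
        change α v * ((α v)⁻¹ * (y v - b v)) + b v = y v
        rw [← mul_assoc, mul_comm (α v), hβα, one_mul, sub_add_cancel]
      continuous_toFun := by fun_prop
      continuous_invFun := by fun_prop }
  have hT : MeasurableEmbedding fun y : C(V, ℝ) => α * y + b := T.measurableEmbedding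
  have hle (y z : C(V, ℝ)) (v : V) : (α * y + b) v ≤ (α * z + b) v ↔ y v ≤ z v := by
    simp [mul_le_mul_iff_right₀ (hα v)]
  unfold DMHR
  rw [hT.integral_map, hT.integral_map]
  simp only [hle]
end

section
/- Let V be a nonempty compact subset of ℝ, let α, b ∈ C(V) with α(v) > 0 for all v ∈ V, let T : C(V) → C(V) be the map T(y)(v) = α(v)y(v) + b(v), and let J ≥ 2. Then for every Borel probability measure P on C(V) and every x ∈ C(V), D_J(T(x), T_*P) = D_J(x, P), where T_*P is the pushforward of P under T. In particular, for all y₁,…,y_j ∈ C(V), x ∈ S(y₁,…,y_j) if and only if T(x) ∈ S(T(y₁),…,T(y_j)). -/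
/-!
The map `T y = α * y + b` acts pointwise by invertible affine maps of `ℝ`, and these commute with
convex combinations because the weights sum to one; this gives the equivalence of simplex
memberships (`inSimplex_affine_iff`). For the depth, `T` is a homeomorphism of `C(V, ℝ)`
(`affineHomeo`), hence a measurable equivalence, so the `j`-fold product of `T_*P` is the
pushforward of the `j`-fold product of `P` under the coordinatewise `T`. Evaluating it on
`{y | T x ∈ S(y)}` gives `P^{⊗j}` of the preimage, which is `{y | x ∈ S(y)}`. As the pushforward is
along a measurable equivalence, the measurability of these sets is never needed.
-/

open MeasureTheory Filter Topology

/-- `x` belongs to the simplex (band) spanned by `y₁, …, y_j`: there are convex weights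
`w` with `x(v) = Σ_k w_k y_k(v)` for all `v`. -/
def InSimplex {V : Set ℝ} {j : ℕ} (x : C(V, ℝ)) (y : Fin j → C(V, ℝ)) : Prop :=
  ∃ w : Fin j → ℝ, (∀ k, 0 ≤ w k) ∧ (∑ k, w k = 1) ∧ ∀ v, x v = ∑ k, w k * y k v

/-- The band depth `D_J(x,P) = Σ_{j=2}^{J} P^{⊗j}({y : x ∈ S(y₁,…,y_j)})`. -/
noncomputable def DJ {V : Set ℝ} [CompactSpace V] [MeasurableSpace C(V, ℝ)]
    (J : ℕ) (x : C(V, ℝ)) (P : Measure C(V, ℝ)) : ℝ :=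
  ∑ j ∈ Finset.Icc 2 J,
    ((Measure.pi fun _ : Fin j => P) {y | InSimplex x y}).toReal

theorem inSimplex_affine_iff {V : Set ℝ} (α b : C(V, ℝ)) (hα : ∀ v, 0 < α v) {j : ℕ}
    (x : C(V, ℝ)) (y : Fin j → C(V, ℝ)) :
    InSimplex x y ↔ InSimplex (α * x + b) (fun k => α * y k + b) := by
  unfold InSimplex
  refine exists_congr fun w => and_congr_right fun _ => and_congr_right fun hw =>
    forall_congr' fun v => ?_
  have key : ∑ k, w k * (α * y k + b) v = α v * ∑ k, w k * y k v + b v := by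
    calc ∑ k, w k * (α * y k + b) v = ∑ k, (α v * (w k * y k v) + w k * b v) := by
          refine Finset.sum_congr rfl fun k _ => ?_
          simp only [ContinuousMap.add_apply, ContinuousMap.mul_apply]
          ring
      _ = α v * ∑ k, w k * y k v + b v := by
          rw [Finset.sum_add_distrib, ← Finset.mul_sum, ← Finset.sum_mul, hw, one_mul]
  rw [key, ContinuousMap.add_apply, ContinuousMap.mul_apply, add_left_inj,
    mul_right_inj' (hα v).ne']

/-- The map `y ↦ α * y + b` as a self-homeomorphism of `C(V, ℝ)`, for `α` positive. -/
noncomputable def affineHomeo {V : Set ℝ} [CompactSpace V] (α b : C(V, ℝ))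
    (hα : ∀ v, 0 < α v) : C(V, ℝ) ≃ₜ C(V, ℝ) where
  toFun y := α * y + b
  invFun y := (⟨fun v => (α v)⁻¹, α.continuous.inv₀ fun v => (hα v).ne'⟩ : C(V, ℝ)) * (y - b)
  left_inv y := by
    ext v
    simp [(hα v).ne']
  right_inv y := by
    ext v
    simp [(hα v).ne']
  continuous_toFun := by fun_prop
  continuous_invFun := by fun_prop

/-- The band depth is invariant under the transformation `T(y) = α·y + b`
with `α(v) > 0` for all `v`: `D_J(T x, T_*P) = D_J(x, P)`; in particular membership in
the simplex is preserved: `x ∈ S(y₁,…,y_j) ↔ T x ∈ S(T y₁,…,T y_j)`. -/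
theorem stmt_12 (V : Set ℝ) [CompactSpace V] (hV : IsCompact V) (hne : V.Nonempty)
    [MeasurableSpace C(V, ℝ)] [BorelSpace C(V, ℝ)]
    (α b : C(V, ℝ)) (hα : ∀ v, 0 < α v)
    (J : ℕ) (hJ : 2 ≤ J)
    (P : Measure C(V, ℝ)) [IsProbabilityMeasure P] (x : C(V, ℝ)) :
    DJ J (α * x + b) (P.map fun y => α * y + b) = DJ J x P ∧
    ∀ (j : ℕ) (y : Fin j → C(V, ℝ)),
      InSimplex x y ↔ InSimplex (α * x + b) (fun k => α * y k + b) := by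
  refine ⟨?_, fun j y => inSimplex_affine_iff α b hα x y⟩
  unfold DJ
  refine Finset.sum_congr rfl fun j _ => congrArg ENNReal.toReal ?_
  let e : C(V, ℝ) ≃ᵐ C(V, ℝ) := (affineHomeo α b hα).toMeasurableEquiv
  have he : MeasurePreserving e P (P.map fun y => α * y + b) := ⟨e.measurable, rfl⟩
  have : IsProbabilityMeasure (P.map fun y => α * y + b) :=
    Measure.isProbabilityMeasure_map e.measurable.aemeasurable
  have hpi : MeasurePreserving (MeasurableEquiv.piCongrRight fun _ : Fin j => e)
      (Measure.pi fun _ : Fin j => P) (Measure.pi fun _ : Fin j => P.map fun y => α * y + b) :=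
    measurePreserving_pi _ _ fun _ => he
  rw [← hpi.measure_preimage_equiv]
  congr 1
  ext y
  exact (inSimplex_affine_iff α b hα x y).symm
end

section
/- Let V be a compact subset of ℝ with Lebesgue measure λ(V) > 0, let α, b ∈ C(V) with α(v) > 0 for all v ∈ V, let T : C(V) → C(V) be the map T(y)(v) = α(v)y(v) + b(v), and let J ≥ 2. Then for every Borel probability measure P on C(V) and every x ∈ C(V), D_MJ(T(x), T_*P) = D_MJ(x, P), where T_*P is the pushforward of P under T. -/
/-!
For `α > 0` the map `T y = α * y + b` is a homeomorphism of `C(V, ℝ)`, with inverse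
`y ↦ α⁻¹ * (y - b)`, and for each `v` the map `t ↦ α v * t + b v` is an increasing bijection of `ℝ`.
Hence the band of `T y₁, …, T yⱼ` contains `T x` at exactly those `v` where the band of
`y₁, …, yⱼ` contains `x` (`band_affine`), and `(T_* P)^{⊗ j}` is the pushforward of `P^{⊗ j}` under
the coordinatewise action of `T`. The claim is the change of variables formula. As `T` is a
measurable equivalence, that formula needs no measurability of the integrand.
-/

open MeasureTheory Filter Topology

lemma band_affine {j : ℕ} [Nonempty (Fin j)] (f : Fin j → ℝ) (a c t : ℝ) (ha : 0 < a) :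
    ((⨅ k, (a * f k + c)) ≤ a * t + c ∧ a * t + c ≤ ⨆ k, (a * f k + c)) ↔
      ((⨅ k, f k) ≤ t ∧ t ≤ ⨆ k, f k) := by
  rw [← ciInf_add (Set.finite_range _).bddBelow, ← ciSup_add (Set.finite_range _).bddAbove,
    ← Real.mul_iInf_of_nonneg ha.le, ← Real.mul_iSup_of_nonneg ha.le]
  simp [ha]

/-- The modified band depth is invariant under the transformation
`T(y) = α·y + b` with `α(v) > 0` for all `v`: `D_MJ(T x, T_*P) = D_MJ(x, P)`. -/
theorem stmt_13 (V : Set ℝ) [CompactSpace V] (hV : IsCompact V)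
    (hVpos : 0 < volume V)
    (α b : C(V, ℝ)) (hα : ∀ v, 0 < α v)
    (J : ℕ) (hJ : 2 ≤ J)
    [MeasurableSpace C(V, ℝ)] [BorelSpace C(V, ℝ)]
    (P : Measure C(V, ℝ)) [IsProbabilityMeasure P] (x : C(V, ℝ)) :
    DMJ J (α * x + b) (P.map fun y => α * y + b) = DMJ J x P := by
  let T : C(V, ℝ) ≃ᵐ C(V, ℝ) := (affineHomeo α b hα).toMeasurableEquiv
  have hT : ∀ y, T y = α * y + b := fun _ => rfl
  change DMJ J (α * x + b) (P.map T) = DMJ J x P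
  unfold DMJ
  refine Finset.sum_congr rfl fun j hj => ?_
  have : Nonempty (Fin j) := ⟨⟨0, by have := (Finset.mem_Icc.mp hj).1; omega⟩⟩
  have : IsProbabilityMeasure (P.map T) := Measure.isProbabilityMeasure_map T.measurable.aemeasurable
  have hpi : MeasurePreserving (MeasurableEquiv.piCongrRight fun _ : Fin j => T)
      (Measure.pi fun _ => P) (Measure.pi fun _ => P.map T) :=
    measurePreserving_pi _ _ fun _ => T.measurable.measurePreserving P
  rw [← hpi.integral_comp (MeasurableEquiv.measurableEmbedding _)]
  congr 1
  refine integral_congr_ae (.of_forall fun y => ?_)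
  have hset : {v | (⨅ k, T (y k) v) ≤ (α * x + b) v ∧ (α * x + b) v ≤ ⨆ k, T (y k) v} =
      {v | (⨅ k, y k v) ≤ x v ∧ x v ≤ ⨆ k, y k v} :=
    Set.ext fun v => band_affine (fun k => y k v) (α v) (b v) (x v) (hα v)
  exact congrArg (fun s => (lamV V s).toReal) hset
end

section
/- Let H be a separable real Hilbert space, 𝔘 ⊂ H a finite nonempty set, c ∈ ℝ with c ≠ 0, b ∈ H, and T : H → H the map T(y) = c·y + b. Then for every Borel probability measure P on H and every x ∈ H, D_RT(T(x), T_*P) = D_RT(x, P), where T_*P is the pushforward of P under T and both depths are computed with the same set 𝔘. -/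
/-!
Projecting onto `u` turns `T` into the affine map `s ↦ c * s + ⟪u, b⟫` of the line, so it is
enough that `D1` is invariant under affine bijections of `ℝ` (`D1_map_affine`). For `c > 0` such a
map preserves each of the two half-lines at `t`; for `c < 0` it exchanges them, and the minimum in
`D1` is symmetric.
-/

open MeasureTheory Filter Topology
open scoped RealInnerProductSpace

theorem D1_map_affine (Q : Measure ℝ) {c : ℝ} (hc : c ≠ 0) (d t : ℝ) :
    D1 (Q.map fun s => c * s + d) (c * t + d) = D1 Q t := by
  have hm : Measurable fun s : ℝ => c * s + d := by fun_prop
  unfold D1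
  rw [Measure.map_apply hm measurableSet_Iic, Measure.map_apply hm measurableSet_Ici]
  rcases lt_or_gt_of_ne hc with h | h
  · have h1 : (fun s : ℝ => c * s + d) ⁻¹' Set.Iic (c * t + d) = Set.Ici t := by
      ext s; simp [mul_le_mul_left_of_neg h]
    have h2 : (fun s : ℝ => c * s + d) ⁻¹' Set.Ici (c * t + d) = Set.Iic t := by
      ext s; simp [mul_le_mul_left_of_neg h]
    rw [h1, h2, min_comm]
  · have h1 : (fun s : ℝ => c * s + d) ⁻¹' Set.Iic (c * t + d) = Set.Iic t := by
      ext s; simp [mul_le_mul_iff_right₀ h]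
    have h2 : (fun s : ℝ => c * s + d) ⁻¹' Set.Ici (c * t + d) = Set.Ici t := by
      ext s; simp [mul_le_mul_iff_right₀ h]
    rw [h1, h2]

/-- For `c ≠ 0` and `T(y) = c•y + b`, the random Tukey depth computed with
the same finite set `U` satisfies `D_RT(T x, T_*P) = D_RT(x, P)`. -/
theorem stmt_14 {H : Type*} [NormedAddCommGroup H] [InnerProductSpace ℝ H]
    [CompleteSpace H] [TopologicalSpace.SeparableSpace H]
    [MeasurableSpace H] [BorelSpace H]
    (U : Finset H) (hU : U.Nonempty)
    (c : ℝ) (hc : c ≠ 0) (b : H)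
    (P : Measure H) [IsProbabilityMeasure P] (x : H) :
    DRT U hU (c • x + b) (P.map fun y => c • y + b) = DRT U hU x P := by
  have : SecondCountableTopology H := UniformSpace.secondCountable_of_separable H
  unfold DRT
  congr 1
  funext u
  have hT : Measurable fun y : H => c • y + b := by fun_prop
  have hu : Measurable fun y : H => ⟪u, y⟫ := by fun_prop
  have ha : Measurable fun s : ℝ => c * s + ⟪u, b⟫ := by fun_prop
  have hcomp : (P.map fun y => c • y + b).map (fun y => ⟪u, y⟫)
      = (P.map fun y => ⟪u, y⟫).map (fun s => c * s + ⟪u, b⟫) := by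
    rw [Measure.map_map hu hT, Measure.map_map ha hu]
    congr 1
    funext y
    simp [inner_add_right, inner_smul_right]
  rw [hcomp, inner_add_right, inner_smul_right, D1_map_affine _ hc]
end

section
/- Let V be a nonempty compact subset of ℝ, let c > 0, and let P = ½δ_{f₁} + ½δ_{f₂} be the Borel probability measure on C(V) assigning mass ½ to each of the constant functions f₁ ≡ −c and f₂ ≡ c. Then for every x ∈ C(V) satisfying −c < x(v) < c for all v ∈ V, D_HR(x,P) = 1/2. In particular, D_HR(·,P) is constant on this set, so the half region depth is not strictly decreasing with respect to a deepest point. -/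
/-! The hypograph and epigraph regions of `x` are closed, hence Borel. Since `V` is nonempty,
the hypograph region contains the constant `-c` but not `c`, and the epigraph region contains
`c` but not `-c`; each therefore has mass exactly `1/2`. -/

open MeasureTheory Filter Topology
open scoped ENNReal

/-- For `P = ½δ_{−c} + ½δ_{c}` (Dirac masses at the constant functions
`−c` and `c`), every `x` with `−c < x(v) < c` for all `v` has `D_HR(x, P) = 1/2`; hence
the half region depth is constant on this set. -/
theorem stmt_16 (V : Set ℝ) [CompactSpace V] (hV : IsCompact V) (hne : V.Nonempty)
    [MeasurableSpace C(V, ℝ)] [BorelSpace C(V, ℝ)]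
    (c : ℝ) (hc : 0 < c)
    (x : C(V, ℝ)) (hx : ∀ v, -c < x v ∧ x v < c) :
    DHR x ((2 : ℝ≥0∞)⁻¹ • Measure.dirac (ContinuousMap.const V (-c)) +
        (2 : ℝ≥0∞)⁻¹ • Measure.dirac (ContinuousMap.const V c)) = 1 / 2 := by
  obtain ⟨v₀, hv₀⟩ := hne
  have h1 : MeasurableSet {y : C(V, ℝ) | ∀ v, y v ≤ x v} := by
    apply IsClosed.measurableSet
    simp only [Set.setOf_forall]
    exact isClosed_iInter fun v =>
      isClosed_le (ContinuousEvalConst.continuous_eval_const v) continuous_const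
  have h2 : MeasurableSet {y : C(V, ℝ) | ∀ v, x v ≤ y v} := by
    apply IsClosed.measurableSet
    simp only [Set.setOf_forall]
    exact isClosed_iInter fun v =>
      isClosed_le continuous_const (ContinuousEvalConst.continuous_eval_const v)
  have a1 : ContinuousMap.const V (-c) ∈ {y : C(V, ℝ) | ∀ v, y v ≤ x v} :=
    fun v => (hx v).1.le
  have a2 : ContinuousMap.const V c ∈ {y : C(V, ℝ) | ∀ v, x v ≤ y v} :=
    fun v => (hx v).2.le
  -- The two exclusions below are where nonemptiness of `V` enters.
  have b1 : ContinuousMap.const V c ∉ {y : C(V, ℝ) | ∀ v, y v ≤ x v} :=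
    fun h => absurd (h ⟨v₀, hv₀⟩) (not_le.mpr (hx ⟨v₀, hv₀⟩).2)
  have b2 : ContinuousMap.const V (-c) ∉ {y : C(V, ℝ) | ∀ v, x v ≤ y v} :=
    fun h => absurd (h ⟨v₀, hv₀⟩) (not_le.mpr (hx ⟨v₀, hv₀⟩).1)
  simp only [DHR, Measure.add_apply, Measure.smul_apply, Measure.dirac_apply' _ h1,
    Measure.dirac_apply' _ h2, Set.indicator_of_mem a1, Set.indicator_of_mem a2,
    Set.indicator_of_notMem b1, Set.indicator_of_notMem b2]
  simp
end

section
/- Let H be a separable real Hilbert space, h > 0, x ∈ H, P a Borel probability measure on H, and f : H → H a Borel measurable map such that ‖f(x) − f(y)‖ ≤ ‖x − y‖ for all y ∈ H. Then D_h(f(x), f_*P) ≥ D_h(x, P), where f_*P is the pushforward of P under f. If moreover P({y : ‖f(x) − f(y)‖ < ‖x − y‖}) > 0, then D_h(f(x), f_*P) > D_h(x, P). -/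
/-! By change of variables, `D_h(f x, f_*P)` is the `P`-integral of the Gaussian kernel at
distance `‖f x - f y‖`. The kernel is strictly decreasing in the distance, so this integrand
dominates the one defining `D_h(x, P)`, strictly wherever the contraction is strict. Both are
integrable (`integrable_gaussian_kernel`), so a nonnegative difference whose support has positive
measure has positive integral. -/

open MeasureTheory Filter Topology

/-- The Gaussian kernel is bounded, so for a fixed centre `a` and a measurable argument `g` it
is integrable against a probability measure; both integrands are of this form. -/
lemma integrable_gaussian_kernel {H : Type*} [NormedAddCommGroup H]
    [MeasurableSpace H] [BorelSpace H] [SecondCountableTopology H]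
    (h : ℝ) (a : H) (P : Measure H) [IsProbabilityMeasure P] (g : H → H) (hg : Measurable g) :
    Integrable (fun y => (h * Real.sqrt (2 * Real.pi))⁻¹ *
      Real.exp (-‖a - g y‖ ^ 2 / (2 * h ^ 2))) P := by
  refine Integrable.const_mul (Integrable.of_bound (C := 1) ?_ (ae_of_all _ fun y => ?_)) _
  · exact Measurable.aestronglyMeasurable (by fun_prop)
  · rw [Real.norm_eq_abs, Real.abs_exp, Real.exp_le_one_iff]
    exact div_nonpos_of_nonpos_of_nonneg (neg_nonpos.2 (by positivity)) (by positivity)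

/-- If `f` is Borel measurable and contracts distances to `x`
(`‖f x − f y‖ ≤ ‖x − y‖` for all `y`), then `D_h(f x, f_*P) ≥ D_h(x, P)`; with strict
inequality if the contraction is strict on a set of positive `P`-measure. -/
theorem stmt_18 {H : Type*} [NormedAddCommGroup H] [InnerProductSpace ℝ H]
    [CompleteSpace H] [TopologicalSpace.SeparableSpace H]
    [MeasurableSpace H] [BorelSpace H]
    (h : ℝ) (hh : 0 < h) (x : H)
    (P : Measure H) [IsProbabilityMeasure P]
    (f : H → H) (hf : Measurable f)
    (hcontr : ∀ y : H, ‖f x - f y‖ ≤ ‖x - y‖) :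
    (∫ y, (h * Real.sqrt (2 * Real.pi))⁻¹ *
        Real.exp (-‖x - y‖ ^ 2 / (2 * h ^ 2)) ∂P) ≤
      (∫ y, (h * Real.sqrt (2 * Real.pi))⁻¹ *
        Real.exp (-‖f x - y‖ ^ 2 / (2 * h ^ 2)) ∂(Measure.map f P)) ∧
    (0 < P {y | ‖f x - f y‖ < ‖x - y‖} →
      (∫ y, (h * Real.sqrt (2 * Real.pi))⁻¹ *
          Real.exp (-‖x - y‖ ^ 2 / (2 * h ^ 2)) ∂P) <
        (∫ y, (h * Real.sqrt (2 * Real.pi))⁻¹ *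
          Real.exp (-‖f x - y‖ ^ 2 / (2 * h ^ 2)) ∂(Measure.map f P))) := by
  haveI : SecondCountableTopology H := UniformSpace.secondCountable_of_separable H
  have hc : 0 < (h * Real.sqrt (2 * Real.pi))⁻¹ := by positivity
  rw [integral_map hf.aemeasurable (Measurable.aestronglyMeasurable (by fun_prop))]
  have i1 := integrable_gaussian_kernel h x P (fun y => y) measurable_id
  have i2 := integrable_gaussian_kernel h (f x) P f hf
  have hle : ∀ y, (h * Real.sqrt (2 * Real.pi))⁻¹ * Real.exp (-‖x - y‖ ^ 2 / (2 * h ^ 2)) ≤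
      (h * Real.sqrt (2 * Real.pi))⁻¹ * Real.exp (-‖f x - f y‖ ^ 2 / (2 * h ^ 2)) := by
    intro y
    have := hcontr y
    gcongr
  refine ⟨integral_mono i1 i2 hle, fun hpos => ?_⟩
  rw [← sub_pos, ← integral_sub i2 i1,
    integral_pos_iff_support_of_nonneg (fun y => sub_nonneg.2 (hle y)) (i2.sub i1)]
  refine hpos.trans_le (measure_mono fun y hy => ?_)
  have hy' : ‖f x - f y‖ < ‖x - y‖ := hy
  rw [Function.mem_support]
  refine (sub_pos.2 ?_).ne'
  gcongr
end
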